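/- Let n ≥ 1 be an integer, let J ⊆ {1,2,…,n}, and let p ∈ (1,∞). Then ∫_0^{2^{n−1}π} ∏_{j∈J} |cos(2^{−j} ξ)|^p dξ ≤ 2^{n−|J|−1} π C_p^{b(J)}, where C_p = 2 π^p ∑_{s=1}^∞ s^{−p}. -/

import Mathlib

open scoped Real

/-- The constant `C_p = 2 π^p ∑_{s=1}^∞ s^{-p}`. -/
noncomputable def Cp (p : ℝ) : ℝ := 2 * π ^ p * ∑' s : ℕ, (1 : ℝ) / ((s : ℝ) + 1) ^ p

/-- The number of components `b(J) = #{j ∈ J : j - 1 ∉ J}` of a finite set of integers. -/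
def numComponents (J : Finset ℕ) : ℕ := (J.filter fun j => j - 1 ∉ J).card

/-- The product of cosine powers. -/
noncomputable def cosProd (p : ℝ) (J : Finset ℕ) (x : ℝ) : ℝ :=
  ∏ j ∈ J, |Real.cos ((2 : ℝ) ^ (-(j : ℤ)) * x)| ^ p

lemma cosProd_continuous (p : ℝ) (hp : 1 < p) (J : Finset ℕ) : Continuous (cosProd p J) := by
  unfold cosProd
  refine continuous_finsetProd _ fun j _ => ?_
  refine Continuous.rpow_const (by fun_prop) fun x => Or.inr (by linarith)

lemma cosProd_nonneg (p : ℝ) (J : Finset ℕ) (x : ℝ) : 0 ≤ cosProd p J x :=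
  Finset.prod_nonneg fun j _ => Real.rpow_nonneg (abs_nonneg _) _

lemma cosProd_add (p : ℝ) (J : Finset ℕ) (a k : ℕ) (hJ : J ⊆ Finset.Icc 1 a) (x : ℝ) :
    cosProd p J (x + k * (2 ^ a * π)) = cosProd p J x := by
  unfold cosProd
  refine Finset.prod_congr rfl fun j hj => ?_
  have hja := (Finset.mem_Icc.1 (hJ hj)).2
  obtain ⟨d, rfl⟩ := Nat.exists_eq_add_of_le hja
  have h : (2 : ℝ) ^ (-(j : ℤ)) * (x + k * (2 ^ (j + d) * π))
      = (2 : ℝ) ^ (-(j : ℤ)) * x + ((k * 2 ^ d : ℕ) : ℝ) * π := by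
    rw [zpow_neg, zpow_natCast]; push_cast; field_simp; ring
  rw [h, Real.cos_add_nat_mul_pi, abs_mul, abs_pow]
  simp

lemma cosProd_neg (p : ℝ) (J : Finset ℕ) (x : ℝ) : cosProd p J (-x) = cosProd p J x := by
  unfold cosProd; simp

lemma integral_split (f : ℝ → ℝ) (hf : Continuous f) (L : ℝ) (N : ℕ) :
    ∫ x in (0:ℝ)..(N * L), f x = ∫ x in (0:ℝ)..L, ∑ k ∈ Finset.range N, f (x + k * L) := by
  rw [intervalIntegral.integral_finsetSum]
  · have := intervalIntegral.sum_integral_adjacent_intervals (f := f) (μ := MeasureTheory.volume)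
      (a := fun k : ℕ => (k : ℝ) * L) (n := N) (fun k _ => hf.intervalIntegrable _ _)
    simp only [Nat.cast_zero, zero_mul] at this
    rw [← this]
    refine Finset.sum_congr rfl fun k _ => ?_
    rw [intervalIntegral.integral_comp_add_right]
    push_cast
    congr 1 <;> ring
  · intro k _
    exact Continuous.intervalIntegrable (by fun_prop) _ _

lemma prod_cos_sin (a m : ℕ) (y : ℝ) :
    (∏ j ∈ Finset.Ioc a (a + m), |Real.cos ((2 : ℝ) ^ (-(j : ℤ)) * y)|) *
      (2 ^ m * |Real.sin ((2 : ℝ) ^ (-((a + m : ℕ) : ℤ)) * y)|) ≤ 1 := by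
  induction m with
  | zero => simpa using Real.abs_sin_le_one _
  | succ m ih =>
    refine le_trans (le_of_eq ?_) ih
    have e : (2 : ℝ) ^ (-((a + m : ℕ) : ℤ)) * y
        = 2 * ((2 : ℝ) ^ (-((a + (m + 1) : ℕ) : ℤ)) * y) := by
      simp only [zpow_neg, zpow_natCast, ← add_assoc, pow_succ]; field_simp
    rw [e, Real.sin_two_mul, ← add_assoc, show Finset.Ioc a (a + m + 1) = insert (a + m + 1) (Finset.Ioc a (a + m)) by
        ext i; simp only [Finset.mem_Ioc, Finset.mem_insert]; omega,
      Finset.prod_insert (by simp), abs_mul, abs_mul, pow_succ]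
    simp only [abs_two]
    ring

lemma cosProd_bound (p : ℝ) (hp : 1 < p) (a m k : ℕ) (hk : k < 2 ^ m) (x : ℝ) (h0 : 0 ≤ x)
    (h1 : x ≤ 2 ^ a * π) :
    cosProd p (Finset.Ioc a (a + m)) (x + k * (2 ^ a * π)) ≤
      π ^ p * (1 / ((k : ℝ) + 1) ^ p) + π ^ p * (1 / (((2 ^ m - 1 - k : ℕ) : ℝ) + 1) ^ p) := by
  set y := x + k * (2 ^ a * π) with hy
  have hs := prod_cos_sin a m y
  set P := ∏ j ∈ Finset.Ioc a (a + m), |Real.cos ((2 : ℝ) ^ (-(j : ℤ)) * y)| with hP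
  have hP0 : 0 ≤ P := Finset.prod_nonneg fun j _ => abs_nonneg _
  have hP1 : P ≤ 1 := Finset.prod_le_one (fun j _ => abs_nonneg _)
    fun j _ => Real.abs_cos_le_one _
  have hc : cosProd p (Finset.Ioc a (a + m)) y = P ^ p := by
    rw [hP, cosProd, Real.finsetProd_rpow _ _ fun j _ => abs_nonneg _]
  rw [hc]
  have hpi := Real.pi_gt_three
  have hpi0 := Real.pi_pos
  -- generic step
  have key : ∀ i : ℕ, P * (2 * i) ≤ 1 → P ^ p ≤ π ^ p * (1 / ((i : ℝ) + 1) ^ p) := by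
    intro i hi
    have h : P ≤ π / ((i : ℝ) + 1) := by
      rw [le_div_iff₀ (by positivity)]; nlinarith
    calc P ^ p ≤ (π / ((i : ℝ) + 1)) ^ p := Real.rpow_le_rpow hP0 h (by linarith)
      _ = _ := by rw [Real.div_rpow hpi0.le (by positivity)]; ring
  set t := x / (2 ^ a * π) with ht
  have ht0 : 0 ≤ t := by positivity
  have ht1 : t ≤ 1 := by rw [ht, div_le_one (by positivity)]; exact h1
  have hM : (0 : ℝ) < 2 ^ m := by positivity
  have hθ : (2 : ℝ) ^ (-((a + m : ℕ) : ℤ)) * y = (t + k) * π / 2 ^ m := by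
    rw [hy, ht, zpow_neg, zpow_natCast, pow_add]; field_simp
  rw [hθ] at hs
  set θ := (t + k) * π / 2 ^ m with hθd
  have hθ0 : 0 ≤ θ := by positivity
  have hcast : ((2 ^ m - 1 - k : ℕ) : ℝ) = 2 ^ m - 1 - k := by
    rw [Nat.sub_sub, Nat.cast_sub (by omega)]; push_cast; ring
  rcases le_total θ (π / 2) with hle | hle
  · refine le_trans (key k ?_) (le_add_of_nonneg_right (by positivity))
    have h2 := Real.mul_le_sin hθ0 hle
    have h3 : (2 * k : ℝ) ≤ 2 ^ m * |Real.sin θ| := by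
      refine le_trans ?_ (mul_le_mul_of_nonneg_left (h2.trans (le_abs_self _)) hM.le)
      have : (2:ℝ) ^ m * (2 / π * θ) = 2 * (t + k) := by rw [hθd]; field_simp
      rw [this]; linarith
    exact (mul_le_mul_of_nonneg_left h3 hP0).trans hs
  · refine le_trans (key (2 ^ m - 1 - k) ?_) (le_add_of_nonneg_left (by positivity))
    have hθπ : 0 ≤ π - θ := by
      have : (k : ℝ) + 1 ≤ 2 ^ m := by exact_mod_cast hk
      have : θ ≤ π := by
        rw [hθd, div_le_iff₀ hM]; nlinarith
      linarith
    have h2 := Real.mul_le_sin hθπ (by linarith)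
    rw [Real.sin_pi_sub] at h2
    have h3 : (2 * ((2 ^ m - 1 - k : ℕ) : ℝ) : ℝ) ≤ 2 ^ m * |Real.sin θ| := by
      refine le_trans ?_ (mul_le_mul_of_nonneg_left (h2.trans (le_abs_self _)) hM.le)
      have : (2:ℝ) ^ m * (2 / π * (π - θ)) = 2 * (2 ^ m - t - k) := by
        rw [hθd]; field_simp; ring
      rw [this, hcast]; linarith
    exact (mul_le_mul_of_nonneg_left h3 hP0).trans hs

lemma cosProd_sum_bound (p : ℝ) (hp : 1 < p) (a m : ℕ) (x : ℝ) (h0 : 0 ≤ x)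
    (h1 : x ≤ 2 ^ a * π) :
    ∑ k ∈ Finset.range (2 ^ m), cosProd p (Finset.Ioc a (a + m)) (x + k * (2 ^ a * π)) ≤
      Cp p := by
  have hpi0 := Real.pi_pos
  have hsum : Summable fun s : ℕ => (1 : ℝ) / ((s : ℝ) + 1) ^ p := by
    have := (summable_nat_add_iff 1).2 (Real.summable_one_div_nat_rpow.2 hp)
    simpa using this
  have hle : ∑ k ∈ Finset.range (2 ^ m), (1 : ℝ) / ((k : ℝ) + 1) ^ p ≤
      ∑' s : ℕ, (1 : ℝ) / ((s : ℝ) + 1) ^ p :=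
    hsum.sum_le_tsum _ fun i _ => by positivity
  refine (Finset.sum_le_sum fun k hk =>
    cosProd_bound p hp a m k (Finset.mem_range.1 hk) x h0 h1).trans ?_
  rw [Finset.sum_add_distrib, ← Finset.mul_sum, ← Finset.mul_sum,
    Finset.sum_range_reflect (fun k : ℕ => (1 : ℝ) / ((k : ℝ) + 1) ^ p) (2 ^ m), Cp]
  have := mul_le_mul_of_nonneg_left hle (Real.rpow_nonneg hpi0.le p)
  linarith

lemma Cp_nonneg (p : ℝ) : 0 ≤ Cp p := by
  have hpi0 := Real.pi_pos
  unfold Cp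
  have : 0 ≤ ∑' s : ℕ, (1 : ℝ) / ((s : ℝ) + 1) ^ p := tsum_nonneg fun s => by positivity
  positivity

lemma cosProd_step (p : ℝ) (hp : 1 < p) (a m : ℕ) (J K : Finset ℕ) (hJ : J ⊆ Finset.Icc 1 a)
    (hd : Disjoint J K) (C : ℝ)
    (hC : ∀ x : ℝ, 0 ≤ x → x ≤ 2 ^ a * π →
      ∑ k ∈ Finset.range (2 ^ m), cosProd p K (x + k * (2 ^ a * π)) ≤ C) :
    ∫ x in (0:ℝ)..(2 ^ (a + m) * π), cosProd p (J ∪ K) x ≤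
      C * ∫ x in (0:ℝ)..(2 ^ a * π), cosProd p J x := by
  have hpi0 := Real.pi_pos
  have e : (2 : ℝ) ^ (a + m) * π = ((2 ^ m : ℕ) : ℝ) * (2 ^ a * π) := by
    push_cast; rw [pow_add]; ring
  have hc := cosProd_continuous p hp
  rw [e, integral_split _ (hc _), ← intervalIntegral.integral_const_mul]
  refine intervalIntegral.integral_mono_on (by positivity) ?_ ?_ fun x hx => ?_
  · refine Continuous.intervalIntegrable (continuous_finsetSum _ fun k _ => ?_) _ _
    exact (hc _).comp (by fun_prop)
  · exact Continuous.intervalIntegrable (continuous_const.mul (hc _)) _ _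
  · have : ∀ k : ℕ, cosProd p (J ∪ K) (x + k * (2 ^ a * π)) =
        cosProd p K (x + k * (2 ^ a * π)) * cosProd p J x := by
      intro k
      rw [← cosProd_add p J a k hJ x]
      unfold cosProd
      rw [Finset.prod_union hd]
      exact mul_comm _ _
    simp only [this]
    rw [← Finset.sum_mul]
    exact mul_le_mul_of_nonneg_right (hC x hx.1 hx.2) (cosProd_nonneg _ _ _)

lemma full_period (p : ℝ) (hp : 1 < p) (n : ℕ) : ∀ J : Finset ℕ, J ⊆ Finset.Icc 1 n →
    ∫ x in (0:ℝ)..(2 ^ n * π), cosProd p J x ≤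
      (2 : ℝ) ^ ((n : ℤ) - (J.card : ℤ)) * π * Cp p ^ numComponents J := by
  induction n using Nat.strong_induction_on with
  | _ n ih =>
  intro J hJ
  rcases n with _ | n
  · have : J = ∅ := by simpa using hJ
    subst this
    simp [cosProd, numComponents]
  by_cases hn : n + 1 ∈ J
  · have h00 : 0 ∉ J := fun h => by have := hJ h; simp at this
    set a := Nat.findGreatest (fun i => i ∉ J) n with ha
    have haJ : a ∉ J := Nat.findGreatest_spec (P := fun i => i ∉ J) (Nat.zero_le n) h00
    have han : a ≤ n := Nat.findGreatest_le n
    have hgt : ∀ i, a < i → i ≤ n + 1 → i ∈ J := by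
      intro i h1 h2
      rcases Nat.lt_or_ge n i with h | h
      · have : i = n + 1 := by omega
        exact this ▸ hn
      · by_contra h3
        exact Nat.findGreatest_is_greatest h1 h h3
    obtain ⟨m, hm⟩ : ∃ m, n + 1 = a + m := ⟨n + 1 - a, by omega⟩
    have hIcc : ∀ j ∈ J, 1 ≤ j ∧ j ≤ n + 1 := fun j hj => Finset.mem_Icc.1 (hJ hj)
    set J' := J.filter (fun j => j ≤ a) with hJ'
    have hJ'a : J' ⊆ Finset.Icc 1 a := by
      intro j hj
      have := Finset.mem_filter.1 hj
      exact Finset.mem_Icc.2 ⟨(hIcc j this.1).1, this.2⟩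
    have hdis : Disjoint J' (Finset.Ioc a (a + m)) := by
      rw [Finset.disjoint_left]
      intro j hj hj2
      have := Finset.mem_Icc.1 (hJ'a hj)
      have := Finset.mem_Ioc.1 hj2
      omega
    have hU : J = J' ∪ Finset.Ioc a (a + m) := by
      ext j
      simp only [hJ', Finset.mem_union, Finset.mem_filter, Finset.mem_Ioc]
      constructor
      · intro h
        have := hIcc j h
        by_cases h2 : j ≤ a
        · exact Or.inl ⟨h, h2⟩
        · exact Or.inr ⟨by omega, by omega⟩
      · rintro (h | h)
        · exact h.1
        · exact hgt j h.1 (by omega)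
    have hcard : J.card = J'.card + m := by
      conv_lhs => rw [hU]
      rw [Finset.card_union_of_disjoint hdis]; simp
    have hb : numComponents J = numComponents J' + 1 := by
      unfold numComponents
      have : J.filter (fun j => j - 1 ∉ J) =
          insert (a + 1) (J'.filter (fun j => j - 1 ∉ J')) := by
        ext j
        simp only [hJ', Finset.mem_insert, Finset.mem_filter]
        constructor
        · rintro ⟨h1, h2⟩
          have h3 := hIcc j h1
          by_cases h4 : j ≤ a
          · exact Or.inr ⟨⟨h1, h4⟩, fun h => h2 h.1⟩
          · left
            by_contra h5
            exact h2 (hgt (j - 1) (by omega) (by omega))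
        · rintro (h | h)
          · subst h
            exact ⟨hgt _ (by omega) (by omega), by simpa using haJ⟩
          · exact ⟨h.1.1, fun h2 => h.2 ⟨h2, by omega⟩⟩
      rw [this, Finset.card_insert_of_notMem]
      simp [hJ']
    have h1 := cosProd_step p hp a m J' (Finset.Ioc a (a + m)) hJ'a hdis (Cp p)
      (fun x h0 h1 => cosProd_sum_bound p hp a m x h0 h1)
    rw [← hU, ← hm] at h1
    refine (h1.trans (mul_le_mul_of_nonneg_left (ih a (by omega) J' hJ'a) (Cp_nonneg p))).trans
      (le_of_eq ?_)
    have e : ((n + 1 : ℕ) : ℤ) - (J.card : ℤ) = (a : ℤ) - (J'.card : ℤ) := by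
      rw [hcard, hm]; push_cast; ring
    rw [e, hb, pow_succ]; ring
  · have hJn : J ⊆ Finset.Icc 1 n := by
      intro j hj
      have := Finset.mem_Icc.1 (hJ hj)
      have : j ≠ n + 1 := fun h => hn (h ▸ hj)
      exact Finset.mem_Icc.2 ⟨by omega, by omega⟩
    have h1 := cosProd_step p hp n 1 J ∅ hJn (by simp) 2 (fun x _ _ => by simp [cosProd])
    rw [Finset.union_empty] at h1
    refine (h1.trans (mul_le_mul_of_nonneg_left (ih n (by omega) J hJn) (by norm_num))).trans
      (le_of_eq ?_)
    have e : ((n + 1 : ℕ) : ℤ) - (J.card : ℤ) = ((n : ℤ) - (J.card : ℤ)) + 1 := by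
      push_cast; ring
    rw [e, zpow_add_one₀ (by norm_num)]; ring

/-- Incomplete cosine expansions of `sin(x)/x`: for `n ≥ 1`, `J ⊆ {1,…,n}` and `p ∈ (1,∞)`,
`∫_0^{2^{n-1}π} ∏_{j∈J} |cos(2^{-j} ξ)|^p dξ ≤ 2^{n-|J|-1} π C_p^{b(J)}`. -/
theorem integral_prod_cos_dyadic_le (n : ℕ) (hn : 1 ≤ n) (J : Finset ℕ)
    (hJ : J ⊆ Finset.Icc 1 n) (p : ℝ) (hp : 1 < p) :
    ∫ ξ in Set.Ioc (0 : ℝ) (2 ^ (n - 1) * π),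
        ∏ j ∈ J, |Real.cos ((2 : ℝ) ^ (-(j : ℤ)) * ξ)| ^ p ≤
      (2 : ℝ) ^ ((n : ℤ) - (J.card : ℤ) - 1) * π * Cp p ^ numComponents J := by
  have hpi0 := Real.pi_pos
  have hfull := full_period p hp n J hJ
  have hc := cosProd_continuous p hp J
  change ∫ ξ in Set.Ioc (0 : ℝ) (2 ^ (n - 1) * π), cosProd p J ξ ≤ _
  rw [← intervalIntegral.integral_of_le (by positivity)]
  have hL : (2 : ℝ) ^ n * π = 2 * (2 ^ (n - 1) * π) := by
    obtain ⟨k, rfl⟩ := Nat.exists_eq_add_of_le' hn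
    simp [pow_succ]; ring
  have hsymm : ∀ x, cosProd p J (2 ^ n * π - x) = cosProd p J x := by
    intro x
    have := cosProd_add p J n 1 hJ (-x)
    rw [cosProd_neg] at this
    rw [← this]; congr 1; push_cast; ring
  have h2 : ∫ x in (2 ^ (n - 1) * π)..(2 ^ n * π), cosProd p J x =
      ∫ x in (0:ℝ)..(2 ^ (n - 1) * π), cosProd p J x := by
    have := intervalIntegral.integral_comp_sub_left (a := 0) (b := 2 ^ (n - 1) * π)
      (fun x => cosProd p J x) (2 ^ n * π)
    simp only [hsymm] at this
    rw [this]; congr 1 <;> linarith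
  have h3 := intervalIntegral.integral_add_adjacent_intervals
    (hc.intervalIntegrable (μ := MeasureTheory.volume) 0 (2 ^ (n - 1) * π))
    (hc.intervalIntegrable (2 ^ (n - 1) * π) (2 ^ n * π))
  rw [h2] at h3
  rw [zpow_sub_one₀ (by norm_num)]
  linarith
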